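/- Let N ≥ 2, d ≥ 1, 𝒩 = {0,…,N−1}^d, and let X ⊆ 𝒩 with Y = 𝒩 \ X. Fix given values f : X → ℂ. For any assignment V_Y = {v_y}_{y∈Y} of values on Y, let c_k(V_Y), k ∈ 𝒩, denote the discrete Fourier coefficients of the combined grid data (f on X, V_Y on Y). Let {e_k}_{k∈𝒩} be positive numbers, and assume there exists an assignment V_Y with |c_k(V_Y)| ≤ e_k for all k ∈ 𝒩. If V*_Y minimizes the functional C(V_Y) = Σ_{k∈𝒩} |c_k(V_Y)|² / e_k² over all assignments V_Y : Y → ℂ, then the Fourier coefficients of the completed data satisfy |c_k(V*_Y)| ≤ N^{d/2} e_k for all k ∈ 𝒩. -/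

import Mathlib

/-!
An admissible assignment `V` makes every term of `C(V)` at most `1`, and there are `N ^ d`
frequencies, so `C(V) ≤ N ^ d`. Minimality gives `C(V*) ≤ N ^ d`; as all terms of `C(V*)` are
nonnegative, each of them satisfies `|c_k(V*)|² / e_k² ≤ N ^ d`, and a square root finishes.
-/

open Real Finset
open scoped Classical

/-- The combined grid data: the given values `f` on `X`, and the assignment `V` on the
complement `Y = 𝒩 \ X`. -/
noncomputable def combinedData (d N : ℕ) (X : Set (Fin d → Fin N))
    (f V : (Fin d → Fin N) → ℂ) : (Fin d → Fin N) → ℂ :=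
  fun n => if n ∈ X then f n else V n

/-- The (non-normalized) discrete Fourier coefficient of grid data `u` at frequency `k`. -/
noncomputable def dftCoeff (d N : ℕ) (u : (Fin d → Fin N) → ℂ) (k : Fin d → Fin N) : ℂ :=
  ∑ n : Fin d → Fin N, u n *
    Complex.exp (-(2 * π * Complex.I / N) * ((∑ j, (k j : ℕ) * (n j : ℕ) : ℕ) : ℂ))

/-- Suppose there exists an assignment `V` of values on `Y = 𝒩 \ X`
whose combined data has Fourier coefficients bounded by `e_k`.  If `V*` minimizes the
weighted functional `C(V) = Σ_k |c_k(V)|²/e_k²`, then the Fourier coefficients of the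
completed data satisfy `|c_k(V*)| ≤ N^{d/2} e_k` for all `k`. -/
theorem stmt4 (d N : ℕ) (hd : 1 ≤ d) (hN : 2 ≤ N)
    (X : Set (Fin d → Fin N)) (f : (Fin d → Fin N) → ℂ)
    (e : (Fin d → Fin N) → ℝ) (he : ∀ k, 0 < e k)
    (hex : ∃ V : (Fin d → Fin N) → ℂ,
      ∀ k, ‖dftCoeff d N (combinedData d N X f V) k‖ ≤ e k)
    (Vstar : (Fin d → Fin N) → ℂ)
    (hmin : ∀ V : (Fin d → Fin N) → ℂ,
      (∑ k : Fin d → Fin N,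
          ‖dftCoeff d N (combinedData d N X f Vstar) k‖ ^ 2 / (e k) ^ 2) ≤
      (∑ k : Fin d → Fin N,
          ‖dftCoeff d N (combinedData d N X f V) k‖ ^ 2 / (e k) ^ 2)) :
    ∀ k, ‖dftCoeff d N (combinedData d N X f Vstar) k‖ ≤
      Real.sqrt ((N : ℝ) ^ d) * e k := by
  obtain ⟨V, hV⟩ := hex
  intro k
  have hC : (∑ k : Fin d → Fin N,
      ‖dftCoeff d N (combinedData d N X f V) k‖ ^ 2 / (e k) ^ 2) ≤ (N : ℝ) ^ d := by
    calc _ ≤ ∑ _k : Fin d → Fin N, (1 : ℝ) := by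
          refine Finset.sum_le_sum fun k _ => ?_
          rw [div_le_one (pow_pos (he k) 2)]
          exact pow_le_pow_left₀ (norm_nonneg _) (hV k) 2
      _ = (N : ℝ) ^ d := by simp
  -- A single nonnegative term of the minimal functional is at most the whole sum.
  have hk : ‖dftCoeff d N (combinedData d N X f Vstar) k‖ ^ 2 / (e k) ^ 2 ≤ (N : ℝ) ^ d :=
    (Finset.single_le_sum
      (f := fun k => ‖dftCoeff d N (combinedData d N X f Vstar) k‖ ^ 2 / (e k) ^ 2)
      (fun _ _ => by positivity) (Finset.mem_univ k)).trans ((hmin V).trans hC)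
  rw [div_le_iff₀ (pow_pos (he k) 2)] at hk
  refine (pow_le_pow_iff_left₀ (norm_nonneg _)
    (mul_nonneg (Real.sqrt_nonneg _) (he k).le) two_ne_zero).1 ?_
  rwa [mul_pow, Real.sq_sqrt (by positivity)]
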